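/- Let T be a TPT probability density supported in [a,b] with 0 < a < b, let λ > 0 be a constant influx, and let ω(r) = λ/(r·T₋₁) be the update frequency. Then the x-independent function f(x,r) = λ·r·T(r) is a stationary solution of the kinetic equation for the joint phase/TPT density: for every x > 0 and almost every r > 0, (1/r)·∂f/∂x(x,r) = T(r)·∫₀^∞ ω(r')·f(x,r') dr' − ω(r)·f(x,r), and it satisfies the boundary condition f(0,r) = λ·r·T(r). -/

import Mathlib

open MeasureTheory Set

/-- The x-independent joint density f(x,r) = λ·r·T(r) is a stationary solution of the
kinetic equation for the joint phase/TPT density, with boundary condition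
f(0,r) = λ·r·T(r), where ω(r) = λ/(r·T₋₁). -/
theorem stmt0 (T : ℝ → ℝ) (a b lam Tneg1 : ℝ) (f : ℝ → ℝ → ℝ)
    (ha : 0 < a) (hab : a < b) (hlam : 0 < lam)
    (hTmeas : Measurable T) (hTnn : ∀ r, 0 ≤ T r)
    (hTsupp : ∀ r, r ∉ Icc a b → T r = 0)
    (hTnorm : ∫ r in Ioi (0:ℝ), T r = 1)
    (hTneg1 : Tneg1 = ∫ r in Ioi (0:ℝ), r⁻¹ * T r)
    (hf : ∀ x r, f x r = lam * r * T r) :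
    (∀ x > (0:ℝ), ∀ᵐ r ∂(volume.restrict (Ioi (0:ℝ))),
      (1 / r) * deriv (fun x' => f x' r) x =
        T r * (∫ r' in Ioi (0:ℝ), (lam / (r' * Tneg1)) * f x r')
          - (lam / (r * Tneg1)) * f x r) ∧
    (∀ r, f 0 r = lam * r * T r) := by
  refine ⟨?_, fun r => hf 0 r⟩
  intro x _
  have key : ∀ r ∈ Ioi (0:ℝ), (lam / (r * Tneg1)) * f x r = (lam ^ 2 / Tneg1) * T r := by
    intro r hr
    have hr0 : r ≠ 0 := ne_of_gt hr
    rw [hf, div_mul_eq_div_div_swap, div_mul_eq_mul_div, div_eq_iff hr0]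
    ring
  have hint : ∫ r' in Ioi (0:ℝ), (lam / (r' * Tneg1)) * f x r' = lam ^ 2 / Tneg1 := by
    rw [setIntegral_congr_fun measurableSet_Ioi key, integral_const_mul, hTnorm, mul_one]
  filter_upwards [ae_restrict_mem measurableSet_Ioi] with r hr
  have hd : deriv (fun x' => f x' r) x = 0 := by
    simp only [hf, deriv_const]
  rw [hint, key r hr, hd]
  ring
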